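/- Assume α = 1, α' = 2, 2β ≤ β', 2γ ≤ γ', Q = (x, y^β, z^γ)R, and that R has characteristic 2. Then (I³ :_R Q³)/(I³ :_R Q²) ≅ R/Q, depth R/(I³ :_R Q³) > 0, hence I^{(3)} = I³ :_R Q³ and length_R(I^{(3)}/I³) = 7 · length_R(R/Q). -/

import Mathlib

open IsLocalRing

/-- The `n`-th symbolic power `I⁽ⁿ⁾ = ⋂_{p ∈ Min(R/I)} (IⁿR_p ∩ R)`. -/
noncomputable def symbolicPower {R : Type*} [CommRing R] (I : Ideal R) (n : ℕ) : Ideal R :=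
  ⨅ p : I.minimalPrimes,
    haveI : Ideal.IsPrime (p : Ideal R) := p.2.1.1
    Ideal.comap (algebraMap R (Localization.AtPrime (p : Ideal R)))
      (Ideal.map (algebraMap R (Localization.AtPrime (p : Ideal R))) (I ^ n))

/-- `M` has (finite) length `n` over `R`: there is a composition series from
`⊥` to `⊤` of length `n`. -/
def HasLength (R M : Type*) [CommRing R] [AddCommGroup M] [Module R M] (n : ℕ) : Prop :=
  ∃ s : CompositionSeries (Submodule R M), s.head = ⊥ ∧ s.last = ⊤ ∧ s.length = n

/-- Each power of one of the three elements is a nonzerodivisor modulo any powers of the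
other two. -/
def PowersCancel {R : Type*} [CommRing R] (x y z : R) : Prop :=
  (∀ (i j k : ℕ) (s f g : R), x ^ i * s = y ^ j * f + z ^ k * g →
    ∃ f' g', s = y ^ j * f' + z ^ k * g') ∧
  (∀ (i j k : ℕ) (s f g : R), y ^ i * s = x ^ j * f + z ^ k * g →
    ∃ f' g', s = x ^ j * f' + z ^ k * g') ∧
  (∀ (i j k : ℕ) (s f g : R), z ^ i * s = x ^ j * f + y ^ k * g →
    ∃ f' g', s = x ^ j * f' + y ^ k * g')

section
variable {R : Type*} [CommRing R]

theorem radical_span_pow [IsLocalRing R] {x y z : R}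
    (h : (Ideal.span {x, y, z}).radical = maximalIdeal R) {i j k : ℕ}
    (hi : i ≠ 0) (hj : j ≠ 0) (hk : k ≠ 0) :
    (Ideal.span {x ^ i, y ^ j, z ^ k}).radical = maximalIdeal R := by
  rw [← h]
  apply le_antisymm
  · apply Ideal.radical_mono
    rw [Ideal.span_le]
    rintro _ (rfl | rfl | rfl)
    · exact Ideal.pow_mem_of_mem _ (Ideal.subset_span (by simp)) _ (Nat.pos_of_ne_zero hi)
    · exact Ideal.pow_mem_of_mem _ (Ideal.subset_span (by simp)) _ (Nat.pos_of_ne_zero hj)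
    · exact Ideal.pow_mem_of_mem _ (Ideal.subset_span (by simp)) _ (Nat.pos_of_ne_zero hk)
  · rw [Ideal.radical_le_radical_iff, Ideal.span_le]
    rintro _ (rfl | rfl | rfl)
    · exact ⟨i, Ideal.subset_span (by simp)⟩
    · exact ⟨j, Ideal.subset_span (by simp)⟩
    · exact ⟨k, Ideal.subset_span (by simp)⟩

theorem IsSMulRegular.mem_of_mul_mem {I : Ideal R} {r s : R} (h : IsSMulRegular (R ⧸ I) r)
    (hs : r * s ∈ I) : s ∈ I := by
  rw [← Ideal.Quotient.eq_zero_iff_mem] at hs ⊢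
  apply h
  simpa [Algebra.smul_def] using hs

theorem exists_eq_add_of_isRegular {x y z s f g : R}
    (h : RingTheory.Sequence.IsRegular R [y, z, x]) (hs : x * s = y * f + z * g) :
    ∃ f' g', s = y * f' + z * g' := by
  have h2 := h.toIsWeaklyRegular.regular_mod_prev 2 (by simp)
  have : s ∈ (Ideal.ofList (List.take 2 [y, z, x]) • ⊤ : Ideal R) := by
    apply IsSMulRegular.mem_of_mul_mem h2
    simp only [smul_eq_mul, Ideal.mul_top, List.take, Ideal.ofList_cons, Ideal.ofList_nil]
    simp only [List.getElem_cons_succ, List.getElem_cons_zero, hs]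
    simp only [bot_le, sup_of_le_left, ← Ideal.span_union]
    exact Ideal.add_mem _ (Ideal.mul_mem_right _ _ (Ideal.subset_span (by simp)))
      (Ideal.mul_mem_right _ _ (Ideal.subset_span (by simp)))
  simp only [smul_eq_mul, Ideal.mul_top, List.take, Ideal.ofList_cons, Ideal.ofList_nil] at this
  simp only [bot_le, sup_of_le_left, ← Ideal.span_union, Set.singleton_union,
    Ideal.mem_span_pair] at this
  obtain ⟨f', g', rfl⟩ := this
  exact ⟨f', g', by ring⟩

theorem exists_eq_mul_of_isRegular {x y z s f : R}
    (h : RingTheory.Sequence.IsRegular R [y, x, z]) (hs : x * s = y * f) :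
    ∃ f', s = y * f' := by
  have h2 := h.toIsWeaklyRegular.regular_mod_prev 1 (by simp)
  have : s ∈ (Ideal.ofList (List.take 1 [y, x, z]) • ⊤ : Ideal R) := by
    apply IsSMulRegular.mem_of_mul_mem h2
    simp only [smul_eq_mul, Ideal.mul_top, List.take, Ideal.ofList_cons, Ideal.ofList_nil]
    simp [hs, Ideal.mem_span_singleton]
  simpa [Ideal.mem_span_singleton, Dvd.dvd] using this

theorem exists_eq_add_of_pow_mul [IsLocalRing R]
    (hCM : ∀ u v w : R, (Ideal.span {u, v, w}).radical = maximalIdeal R →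
      RingTheory.Sequence.IsRegular R [u, v, w])
    {x y z : R} (h : (Ideal.span {x, y, z}).radical = maximalIdeal R) (i j k : ℕ) {s f g : R}
    (hs : x ^ i * s = y ^ j * f + z ^ k * g) : ∃ f' g', s = y ^ j * f' + z ^ k * g' := by
  rcases eq_or_ne i 0 with rfl | hi
  · exact ⟨f, g, by simpa using hs⟩
  rcases eq_or_ne j 0 with rfl | hj
  · exact ⟨s, 0, by simp⟩
  rcases eq_or_ne k 0 with rfl | hk
  · exact ⟨0, s, by simp⟩
  refine exists_eq_add_of_isRegular (hCM _ _ _ ?_) hs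
  rw [← radical_span_pow h hi hj hk]
  congr 2
  ext t
  simp only [Set.mem_insert_iff, Set.mem_singleton_iff]
  tauto

theorem exists_eq_mul_of_pow_mul [IsLocalRing R]
    (hCM : ∀ u v w : R, (Ideal.span {u, v, w}).radical = maximalIdeal R →
      RingTheory.Sequence.IsRegular R [u, v, w])
    {x y z : R} (h : (Ideal.span {x, y, z}).radical = maximalIdeal R) (i : ℕ) {s f : R}
    (hs : y ^ i * s = x * f) : ∃ f', s = x * f' := by
  rcases eq_or_ne i 0 with rfl | hi
  · exact ⟨f, by simpa using hs⟩
  refine exists_eq_mul_of_isRegular (z := z) (hCM _ _ _ ?_) hs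
  simpa using radical_span_pow h one_ne_zero hi one_ne_zero

theorem powersCancel_of_isRegular [IsLocalRing R]
    (hCM : ∀ u v w : R, (Ideal.span {u, v, w}).radical = maximalIdeal R →
      RingTheory.Sequence.IsRegular R [u, v, w])
    {x y z : R} (h : (Ideal.span {x, y, z}).radical = maximalIdeal R) : PowersCancel x y z := by
  refine ⟨fun i j k s f g => exists_eq_add_of_pow_mul hCM h i j k,
    fun i j k s f g => exists_eq_add_of_pow_mul hCM ?_ i j k,
    fun i j k s f g => exists_eq_add_of_pow_mul hCM ?_ i j k⟩
  · rw [Set.insert_comm, h]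
  · rw [Set.insert_comm, Set.pair_comm, Set.insert_comm, Set.pair_comm, Set.insert_comm, ← h]
    congr 2
    ext t
    simp only [Set.mem_insert_iff, Set.mem_singleton_iff]
    tauto

theorem PowersCancel.pow {x y z : R} (h : PowersCancel x y z) (l m n : ℕ) :
    PowersCancel (x ^ l) (y ^ m) (z ^ n) := by
  simp only [PowersCancel, ← pow_mul]
  exact ⟨fun i j k => h.1 _ _ _, fun i j k => h.2.1 _ _ _, fun i j k => h.2.2 _ _ _⟩

theorem mem_span_triple_cube {a b c f : R} (hf : f ∈ Ideal.span {a, b, c} ^ 3) :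
    ∃ t : Fin 10 → R, f = t 0 * (a * a * a) + t 1 * (a * a * b) + t 2 * (a * a * c)
      + t 3 * (a * b * b) + t 4 * (a * b * c) + t 5 * (a * c * c) + t 6 * (b * b * b)
      + t 7 * (b * b * c) + t 8 * (b * c * c) + t 9 * (c * c * c) := by
  have key : ∀ {K : Ideal R} {g}, g ∈ Ideal.span {a, b, c} * K →
      ∃ k₁ ∈ K, ∃ k₂ ∈ K, ∃ k₃ ∈ K, g = a * k₁ + b * k₂ + c * k₃ := by
    intro K g hg
    simp only [Ideal.span_insert, Ideal.sup_mul, Submodule.mem_sup,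
      Ideal.mem_span_singleton_mul] at hg
    obtain ⟨_, ⟨k₁, h₁, rfl⟩, _, ⟨_, ⟨k₂, h₂, rfl⟩, _, ⟨k₃, h₃, rfl⟩, rfl⟩, rfl⟩ := hg
    exact ⟨k₁, h₁, k₂, h₂, k₃, h₃, by ring⟩
  have lin : ∀ {g}, g ∈ Ideal.span {a, b, c} → ∃ k₁ k₂ k₃, g = a * k₁ + b * k₂ + c * k₃ := by
    intro g hg
    obtain ⟨k₁, -, k₂, -, k₃, -, h⟩ := key (K := ⊤) (by simpa using hg)
    exact ⟨k₁, k₂, k₃, h⟩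
  rw [pow_succ', pow_two] at hf
  obtain ⟨k₁, h₁, k₂, h₂, k₃, h₃, rfl⟩ := key hf
  obtain ⟨l₁, p₁, l₂, p₂, l₃, p₃, rfl⟩ := key h₁
  obtain ⟨m₁, q₁, m₂, q₂, m₃, q₃, rfl⟩ := key h₂
  obtain ⟨n₁, r₁, n₂, r₂, n₃, r₃, rfl⟩ := key h₃
  obtain ⟨a1, a2, a3, rfl⟩ := lin p₁
  obtain ⟨b1, b2, b3, rfl⟩ := lin p₂
  obtain ⟨c1, c2, c3, rfl⟩ := lin p₃
  obtain ⟨d1, d2, d3, rfl⟩ := lin q₁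
  obtain ⟨e1, e2, e3, rfl⟩ := lin q₂
  obtain ⟨f1, f2, f3, rfl⟩ := lin q₃
  obtain ⟨g1, g2, g3, rfl⟩ := lin r₁
  obtain ⟨h1, h2, h3, rfl⟩ := lin r₂
  obtain ⟨i1, i2, i3, rfl⟩ := lin r₃
  refine ⟨![a1, a2 + b1 + d1, a3 + c1 + g1, b2 + d2 + e1, b3 + c2 + d3 + f1 + g2 + h1,
    c3 + g3 + i1, e2, e3 + f2 + h2, f3 + h3 + i2, i3], ?_⟩
  simp only [Matrix.cons_val]
  ring
end

section
variable {R : Type*} [CommRing R]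

/-- The data attached to the matrix `((u, v, w), (v²p, w²q, u²))` in characteristic two: the maximal
minors `a, b, c`, an element `e` with `u * e ∈ (a, b, c)²` and an element `d` with
`u² * d, v² * d, w² * d ∈ (a, b, c)³`. -/
structure IsMinorsSystem (u v w p q a b c d e : R) : Prop where
  two_eq_zero : (2 : R) = 0
  ha : a = w ^ 3 * q + u ^ 2 * v
  hb : b = u ^ 3 + v ^ 2 * w * p
  hc : c = v ^ 3 * p + u * w ^ 2 * q
  hd : d = v ^ 7 * p ^ 3 + u * v ^ 4 * w ^ 2 * p ^ 2 * q + u ^ 2 * v * w ^ 4 * p * q ^ 2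
    + p * q ^ 3 * w ^ 7 + q * u ^ 7 + u ^ 4 * v ^ 2 * w * p * q
  he : e = u * v ^ 5 * p ^ 2 + v * w ^ 5 * p * q ^ 2 + u ^ 5 * w * q + u ^ 2 * v ^ 2 * w ^ 2 * p * q

namespace IsMinorsSystem
variable {u v w p q a b c d e : R}

theorem row₁ (h : IsMinorsSystem u v w p q a b c d e) :
    u * a + v * b + w * c = 0 := by
  obtain ⟨h2, rfl, rfl, rfl, rfl, rfl⟩ := h
  grind

theorem row₂ (h : IsMinorsSystem u v w p q a b c d e) :
    v ^ 2 * p * a + w ^ 2 * q * b + u ^ 2 * c = 0 := by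
  obtain ⟨h2, rfl, rfl, rfl, rfl, rfl⟩ := h
  grind

theorem u_mul_e (h : IsMinorsSystem u v w p q a b c d e) :
    u * e = w * q * b ^ 2 + v * p * a * c := by
  obtain ⟨h2, rfl, rfl, rfl, rfl, rfl⟩ := h
  grind

theorem sq_u_mul_d (h : IsMinorsSystem u v w p q a b c d e) :
    u ^ 2 * d = q * b ^ 3 + p * a * c ^ 2 := by
  obtain ⟨h2, rfl, rfl, rfl, rfl, rfl⟩ := h
  grind

theorem sq_v_mul_d (h : IsMinorsSystem u v w p q a b c d e) :
    v ^ 2 * d = c ^ 3 + q * a ^ 2 * b := by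
  obtain ⟨h2, rfl, rfl, rfl, rfl, rfl⟩ := h
  grind

theorem sq_w_mul_d (h : IsMinorsSystem u v w p q a b c d e) :
    w ^ 2 * d = p * a ^ 3 + b ^ 2 * c := by
  obtain ⟨h2, rfl, rfl, rfl, rfl, rfl⟩ := h
  grind

theorem v_mul_w_mul_d (h : IsMinorsSystem u v w p q a b c d e) :
    v * w * d = a * e + b * c ^ 2 := by
  obtain ⟨h2, rfl, rfl, rfl, rfl, rfl⟩ := h
  grind

end IsMinorsSystem
end

section
variable {R : Type*} [CommRing R]

/-- The ideal `(u², v², w², uvw)`. -/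
def squaresAndProd (u v w : R) : Ideal R := Ideal.span {u ^ 2, v ^ 2, w ^ 2, u * v * w}

theorem mem_squaresAndProd {u v w e : R} : e ∈ squaresAndProd u v w ↔
    ∃ a b c d, e = u ^ 2 * a + v ^ 2 * b + w ^ 2 * c + u * v * w * d := by
  simp only [squaresAndProd, Ideal.mem_span_insert, Ideal.mem_span_singleton']
  constructor
  · rintro ⟨a, _, ⟨b, _, ⟨c, _, ⟨d, rfl⟩, rfl⟩, rfl⟩, rfl⟩
    exact ⟨a, b, c, d, by ring⟩
  · rintro ⟨a, b, c, d, rfl⟩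
    exact ⟨a, _, ⟨b, _, ⟨c, _, ⟨d, rfl⟩, rfl⟩, rfl⟩, by ring⟩

theorem mem_span_triple' {u v w e : R} : e ∈ Ideal.span {u, v, w} ↔
    ∃ a b c, e = u * a + v * b + w * c := by
  simp only [Ideal.mem_span_insert, Ideal.mem_span_singleton']
  constructor
  · rintro ⟨a, _, ⟨b, _, ⟨c, rfl⟩, rfl⟩, rfl⟩
    exact ⟨a, b, c, by ring⟩
  · rintro ⟨a, b, c, rfl⟩
    exact ⟨a, _, ⟨b, _, ⟨c, rfl⟩, rfl⟩, by ring⟩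

theorem mem_squaresAndProd_of_mod {u v w e : R} (h : PowersCancel u v w)
    (hu : ∃ r s t, e = u * r + v ^ 2 * s + w ^ 2 * t)
    (hv : ∃ r s t, e = v * r + u ^ 2 * s + w ^ 2 * t)
    (hw : ∃ r s t, e = w * r + u ^ 2 * s + v ^ 2 * t) : e ∈ squaresAndProd u v w := by
  obtain ⟨h1, h2, h3⟩ := h
  obtain ⟨r, s, t, he⟩ := hu
  obtain ⟨r', s', t', he'⟩ := hv
  obtain ⟨r'', s'', t'', he''⟩ := hw
  obtain ⟨f, g, hf⟩ := h1 1 1 2 (r - u * s') (r' - v * s) (t' - t)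
    (by linear_combination he' - he)
  obtain ⟨f₁, g₁, hf₁⟩ := h1 1 2 1 (v * f + u * (s' - s'')) (t'' - s) (r'' - u * w * g - w * t)
    (by linear_combination he'' - he - u * hf)
  obtain ⟨f₂, g₂, hf₂⟩ := h2 1 1 1 (f - v * f₁) (s'' - s') g₁ (by linear_combination hf₁)
  rw [mem_squaresAndProd]
  exact ⟨s' + v * f₂, s + u * f₁, t + u * g, g₂,
    by linear_combination he + u * hf + u * v * hf₂⟩

theorem length_quotient_eq_add {K Q : Ideal R} {g : R} (h : ∀ e, e * g ∈ K ↔ e ∈ Q) :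
    Module.length R (R ⧸ K) =
      Module.length R (R ⧸ Q) + Module.length R (R ⧸ (K ⊔ Ideal.span {g})) := by
  refine Module.length_eq_add_of_exact
    (Submodule.mapQ Q K (LinearMap.toSpanSingleton R R g) fun e he => by simpa using (h e).2 he)
    (Submodule.factor le_sup_left) ?_ (Submodule.factor_surjective _) ?_
  · rw [← LinearMap.ker_eq_bot, LinearMap.ker_eq_bot']
    intro e he
    obtain ⟨e, rfl⟩ := Submodule.Quotient.mk_surjective _ e
    rw [Submodule.mapQ_apply, Submodule.Quotient.mk_eq_zero] at he
    rw [Submodule.Quotient.mk_eq_zero]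
    exact (h e).1 (by simpa using he)
  · intro t
    obtain ⟨t, rfl⟩ := Submodule.Quotient.mk_surjective _ t
    change (Submodule.Quotient.mk t : R ⧸ (K ⊔ Ideal.span {g})) = 0 ↔ _
    rw [Submodule.Quotient.mk_eq_zero, Submodule.mem_sup]
    constructor
    · rintro ⟨k, hk, s, hs, rfl⟩
      obtain ⟨e, rfl⟩ := Ideal.mem_span_singleton'.1 hs
      refine ⟨Submodule.Quotient.mk e, ?_⟩
      rw [Submodule.mapQ_apply, Submodule.Quotient.eq]
      simpa using hk
    · rintro ⟨e, he⟩
      obtain ⟨e, rfl⟩ := Submodule.Quotient.mk_surjective _ e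
      rw [Submodule.mapQ_apply, eq_comm, Submodule.Quotient.eq] at he
      exact ⟨_, he, e * g, Ideal.mem_span_singleton'.2 ⟨e, rfl⟩, by simp⟩

theorem mul_mem_squaresAndProd_iff {u v w e : R} (h : PowersCancel u v w) :
    e * (u * v) ∈ squaresAndProd u v w ↔ e ∈ Ideal.span {u, v, w} := by
  obtain ⟨h1, h2, h3⟩ := h
  simp only [mem_squaresAndProd, mem_span_triple']
  constructor
  · rintro ⟨a, b, c, d, he⟩
    obtain ⟨f, g, hf⟩ := h1 1 2 2 (e * v - u * a - v * w * d) b c (by linear_combination he)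
    obtain ⟨f', g', hf'⟩ := h2 1 1 1 (e - v * f - w * d) a (w * g) (by linear_combination hf)
    exact ⟨f', f, d + g', by linear_combination hf'⟩
  · rintro ⟨a, b, c, rfl⟩
    exact ⟨a * v, b * u, 0, c, by ring⟩

theorem length_quotient_squaresAndProd {u v w : R} (h : PowersCancel u v w) :
    Module.length R (R ⧸ squaresAndProd u v w) =
      7 * Module.length R (R ⧸ Ideal.span {u, v, w}) := by
  have e0 : ∀ e, e * (u * v) ∈ squaresAndProd u v w ↔ e ∈ Ideal.span {u, v, w} := fun e =>
    mul_mem_squaresAndProd_iff h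
  obtain ⟨h1, h2, h3⟩ := h
  have e1 : ∀ e, e * (u * w) ∈ squaresAndProd u v w ⊔ Ideal.span {u * v} ↔
      e ∈ Ideal.span {u, v, w} := by
    intro e
    simp only [Submodule.mem_sup, mem_squaresAndProd, Ideal.mem_span_singleton', mem_span_triple']
    constructor
    · rintro ⟨_, ⟨a, b, c, d, rfl⟩, _, ⟨k, rfl⟩, he⟩
      obtain ⟨f, g, hf⟩ := h1 1 2 2 (e * w - u * a - v * w * d - k * v) b c
        (by linear_combination -he)
      obtain ⟨f', g', hf'⟩ := h3 1 1 1 (e - w * g - v * d) a (k + v * f)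
        (by linear_combination hf)
      exact ⟨f', g' + d, g, by linear_combination hf'⟩
    · rintro ⟨a, b, c, rfl⟩
      exact ⟨_, ⟨a * w, 0, c * u, b, rfl⟩, _, ⟨0, rfl⟩, by ring⟩
  have e2 : ∀ e, e * (v * w) ∈ squaresAndProd u v w ⊔ Ideal.span {u * v} ⊔ Ideal.span {u * w} ↔
      e ∈ Ideal.span {u, v, w} := by
    intro e
    simp only [Submodule.mem_sup, mem_squaresAndProd, Ideal.mem_span_singleton', mem_span_triple']
    constructor
    · rintro ⟨_, ⟨_, ⟨a, b, c, d, rfl⟩, _, ⟨k, rfl⟩, rfl⟩, _, ⟨l, rfl⟩, he⟩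
      obtain ⟨f, g, hf⟩ := h2 1 1 2 (e * w - v * b) (u * a + v * w * d + k * v + l * w) c
        (by linear_combination -he)
      obtain ⟨f', g', hf'⟩ := h3 1 1 1 (e - w * g) f b (by linear_combination hf)
      exact ⟨f', g', g, by linear_combination hf'⟩
    · rintro ⟨a, b, c, rfl⟩
      exact ⟨_, ⟨_, ⟨0, b * w, c * v, a, rfl⟩, _, ⟨0, rfl⟩, rfl⟩, _, ⟨0, rfl⟩, by ring⟩
  have e3 : ∀ e, e * u ∈ squaresAndProd u v w ⊔ Ideal.span {u * v} ⊔ Ideal.span {u * w} ⊔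
      Ideal.span {v * w} ↔ e ∈ Ideal.span {u, v, w} := by
    intro e
    simp only [Submodule.mem_sup, mem_squaresAndProd, Ideal.mem_span_singleton', mem_span_triple']
    constructor
    · rintro ⟨_, ⟨_, ⟨_, ⟨a, b, c, d, rfl⟩, _, ⟨k, rfl⟩, rfl⟩, _, ⟨l, rfl⟩, rfl⟩, _, ⟨m, rfl⟩, he⟩
      obtain ⟨f, g, hf⟩ := h1 1 1 1 (e - u * a - v * w * d - k * v - l * w) (v * b + m * w) (w * c)
        (by linear_combination -he)
      exact ⟨a, w * d + k + f, l + g, by linear_combination hf⟩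
    · rintro ⟨a, b, c, rfl⟩
      exact ⟨_, ⟨_, ⟨_, ⟨a, 0, 0, 0, rfl⟩, _, ⟨b, rfl⟩, rfl⟩, _, ⟨c, rfl⟩, rfl⟩, _, ⟨0, rfl⟩,
        by ring⟩
  have e4 : ∀ e, e * v ∈ squaresAndProd u v w ⊔ Ideal.span {u * v} ⊔ Ideal.span {u * w} ⊔
      Ideal.span {v * w} ⊔ Ideal.span {u} ↔ e ∈ Ideal.span {u, v, w} := by
    intro e
    simp only [Submodule.mem_sup, mem_squaresAndProd, Ideal.mem_span_singleton', mem_span_triple']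
    constructor
    · rintro ⟨_, ⟨_, ⟨_, ⟨_, ⟨a, b, c, d, rfl⟩, _, ⟨k, rfl⟩, rfl⟩, _, ⟨l, rfl⟩, rfl⟩,
        _, ⟨m, rfl⟩, rfl⟩, _, ⟨n, rfl⟩, he⟩
      obtain ⟨f, g, hf⟩ := h2 1 1 1 (e - v * b - m * w) (u * a + v * w * d + k * v + l * w + n)
        (w * c) (by linear_combination -he)
      exact ⟨f, b, m + g, by linear_combination hf⟩
    · rintro ⟨a, b, c, rfl⟩
      exact ⟨_, ⟨_, ⟨_, ⟨_, ⟨0, b, 0, 0, rfl⟩, _, ⟨a, rfl⟩, rfl⟩, _, ⟨0, rfl⟩, rfl⟩, _, ⟨c, rfl⟩,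
        rfl⟩, _, ⟨0, rfl⟩, by ring⟩
  have e5 : ∀ e, e * w ∈ squaresAndProd u v w ⊔ Ideal.span {u * v} ⊔ Ideal.span {u * w} ⊔
      Ideal.span {v * w} ⊔ Ideal.span {u} ⊔ Ideal.span {v} ↔ e ∈ Ideal.span {u, v, w} := by
    intro e
    simp only [Submodule.mem_sup, mem_squaresAndProd, Ideal.mem_span_singleton', mem_span_triple']
    constructor
    · rintro ⟨_, ⟨_, ⟨_, ⟨_, ⟨_, ⟨a, b, c, d, rfl⟩, _, ⟨k, rfl⟩, rfl⟩, _, ⟨l, rfl⟩, rfl⟩,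
        _, ⟨m, rfl⟩, rfl⟩, _, ⟨n, rfl⟩, rfl⟩, _, ⟨o, rfl⟩, he⟩
      obtain ⟨f, g, hf⟩ := h3 1 1 1 (e - w * c) (u * a + v * w * d + k * v + l * w + n)
        (v * b + m * w + o) (by linear_combination -he)
      exact ⟨f, g, c, by linear_combination hf⟩
    · rintro ⟨a, b, c, rfl⟩
      exact ⟨_, ⟨_, ⟨_, ⟨_, ⟨_, ⟨0, 0, c, 0, rfl⟩, _, ⟨0, rfl⟩, rfl⟩, _, ⟨a, rfl⟩, rfl⟩,
        _, ⟨b, rfl⟩, rfl⟩, _, ⟨0, rfl⟩, rfl⟩, _, ⟨0, rfl⟩, by ring⟩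
  have top : squaresAndProd u v w ⊔ Ideal.span {u * v} ⊔ Ideal.span {u * w} ⊔
      Ideal.span {v * w} ⊔ Ideal.span {u} ⊔ Ideal.span {v} ⊔ Ideal.span {w} =
        Ideal.span {u, v, w} := by
    apply le_antisymm
    · simp only [sup_le_iff, Ideal.span_singleton_le_iff_mem]
      refine ⟨⟨⟨⟨⟨⟨fun e he => ?_, ?_⟩, ?_⟩, ?_⟩, ?_⟩, ?_⟩, ?_⟩
      · obtain ⟨a, b, c, d, rfl⟩ := mem_squaresAndProd.1 he
        exact mem_span_triple'.2 ⟨u * a + v * w * d, v * b, w * c, by ring⟩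
      · exact mem_span_triple'.2 ⟨v, 0, 0, by ring⟩
      · exact mem_span_triple'.2 ⟨w, 0, 0, by ring⟩
      · exact mem_span_triple'.2 ⟨0, w, 0, by ring⟩
      all_goals exact Ideal.subset_span (by simp)
    · rw [Ideal.span_insert, Ideal.span_insert, ← sup_assoc]
      exact sup_le_sup_right (sup_le_sup_right le_sup_right _) _
  rw [length_quotient_eq_add e0, length_quotient_eq_add e1, length_quotient_eq_add e2,
    length_quotient_eq_add e3, length_quotient_eq_add e4, length_quotient_eq_add e5, top]
  ring

theorem nonempty_quotient_equiv_of_sup_span {I N K J : Ideal R} {d : R}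
    (hJ : J = I ⊔ Ideal.span {d}) (hI : I ≤ N) (h : ∀ e, e * d ∈ N ↔ e ∈ K) :
    Nonempty ((↥J ⧸ Submodule.comap J.subtype N) ≃ₗ[R] (R ⧸ K)) := by
  have hd : d ∈ J := hJ ▸ Ideal.mem_sup_right (Ideal.mem_span_singleton_self d)
  let φ : R →ₗ[R] (↥J ⧸ Submodule.comap J.subtype N) :=
    (Submodule.mkQ _).comp (LinearMap.toSpanSingleton R J ⟨d, hd⟩)
  have hφ : ∀ e, φ e = Submodule.Quotient.mk (e • (⟨d, hd⟩ : J)) := fun e => rfl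
  have hker : LinearMap.ker φ = K := by
    ext e
    rw [LinearMap.mem_ker, hφ, Submodule.Quotient.mk_eq_zero, ← h e]
    rfl
  have hsurj : Function.Surjective φ := by
    intro t
    obtain ⟨⟨t, ht⟩, rfl⟩ := Submodule.Quotient.mk_surjective _ t
    have ht' := ht
    rw [hJ, Submodule.mem_sup] at ht'
    obtain ⟨i, hi, s, hs, rfl⟩ := ht'
    obtain ⟨e, rfl⟩ := Ideal.mem_span_singleton'.1 hs
    refine ⟨e, ?_⟩
    rw [hφ, eq_comm, Submodule.Quotient.eq]
    have : i + e * d - e * d ∈ N := by simpa using hI hi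
    exact this
  exact ⟨((Submodule.quotEquivOfEq _ _ hker).symm.trans
    (φ.quotKerEquivOfSurjective hsurj)).symm⟩

theorem hasLength_of_length_eq {M : Type*} [AddCommGroup M] [Module R M] {n : ℕ}
    (h : Module.length R M = n) : HasLength R M n := by
  have : IsFiniteLength R M := Module.length_ne_top_iff.1 (by simp [h])
  obtain ⟨s, hs₁, hs₂⟩ := isFiniteLength_iff_exists_compositionSeries.1 this
  refine ⟨s, hs₁, hs₂, ?_⟩
  rw [← Module.length_compositionSeries s hs₁ hs₂] at h
  exact_mod_cast h

theorem length_quotient_ne_top [IsNoetherianRing R] [IsLocalRing R] {Q : Ideal R}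
    (h : Q.radical = maximalIdeal R) : Module.length R (R ⧸ Q) ≠ ⊤ := by
  have hQ : IsArtinianRing (R ⧸ Q) := by
    rw [isArtinianRing_iff_krullDimLE_zero]
    refine Ring.KrullDimLE.mk₀ fun P hP => ?_
    have hP' : (P.comap (Ideal.Quotient.mk Q)).IsPrime := hP.comap _
    have hle : maximalIdeal R ≤ P.comap (Ideal.Quotient.mk Q) := by
      rw [← h, hP'.radical_le_iff]
      exact fun t ht => by simp [Ideal.mem_comap, Ideal.Quotient.eq_zero_iff_mem.2 ht]
    have hmax : (P.comap (Ideal.Quotient.mk Q)).IsMaximal :=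
      (le_antisymm hle (le_maximalIdeal hP'.ne_top)) ▸ maximalIdeal.isMaximal R
    rw [← Ideal.map_comap_of_surjective _ Ideal.Quotient.mk_surjective P]
    refine (Ideal.map_eq_top_or_isMaximal_of_surjective _ Ideal.Quotient.mk_surjective
      hmax).resolve_left ?_
    rw [Ideal.map_comap_of_surjective _ Ideal.Quotient.mk_surjective]
    exact hP.ne_top
  have : IsArtinian R (R ⧸ Q) := isArtinian_of_surjective_algebraMap
    (Ideal.Quotient.mk_surjective (I := Q))
  exact Module.length_ne_top
end

section
variable {R : Type*} [CommRing R]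

theorem not_lt_of_mem_minimalPrimes_sup_span [IsNoetherianRing R] {p P M : Ideal R} {x : R}
    [p.IsPrime] [P.IsPrime] (hM : M ∈ (p ⊔ Ideal.span {x}).minimalPrimes) (hPM : P < M) :
    ¬ p < P := by
  intro hpP
  have hM' : M.IsPrime := hM.1.1
  have hpM : p ≤ M := hpP.le.trans hPM.le
  have hlt : ∀ {A B : Ideal R}, p ≤ A → p ≤ B → A < B →
      A.map (Ideal.Quotient.mk p) < B.map (Ideal.Quotient.mk p) := by
    intro A B hA hB hAB
    refine lt_of_le_not_ge (Ideal.map_mono hAB.le) fun h => ?_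
    obtain ⟨t, htB, htA⟩ := SetLike.exists_of_lt hAB
    exact htA ((Ideal.mem_quotient_iff_mem hA).1 (h (Ideal.mem_map_of_mem _ htB)))
  have hprime : ∀ A : Ideal R, A.IsPrime → p ≤ A → (A.map (Ideal.Quotient.mk p)).IsPrime := by
    intro A hA hpA
    exact Ideal.map_isPrime_of_surjective Ideal.Quotient.mk_surjective (by simpa using hpA)
  have h1 := Ideal.map_height_le_one_of_mem_minimalPrimes hM
  have := hprime M hM' hpM
  have := hprime P ‹_› hpP.le
  have := hprime p ‹_› le_rfl
  have h2 := (Ideal.height_le_iff (n := 1)).1 (by exact_mod_cast h1) _ ‹_› (hlt hpP.le hpM hPM)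
  have h3 : (P.map (Ideal.Quotient.mk p)).height ≤ (0 : ℕ) := by
    exact_mod_cast Order.lt_one_iff_nonpos.1 (by exact_mod_cast h2)
  have h4 := (Ideal.height_le_iff (n := 0)).1 h3 _ ‹_› (hlt le_rfl hpP.le hpP)
  simp at h4

theorem symbolicPower_eq_of_forall_mul_mem [IsNoetherianRing R] [IsLocalRing R]
    {I J T : Ideal R} {x : R} {n : ℕ} (hIJ : I ^ n ≤ J) (hJ : J ≠ ⊤) (hx : x ∈ maximalIdeal R)
    (hreg : ∀ h, x * h ∈ J → h ∈ J)
    (hI : ∀ P : Ideal R, P.IsPrime → I ≤ P → x ∈ P → P = maximalIdeal R)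
    (hT : ∀ P : Ideal R, P.IsPrime → T ≤ P → P = maximalIdeal R)
    (hTJ : ∀ t ∈ T, ∀ h ∈ J, t * h ∈ I ^ n) : symbolicPower I n = J := by
  have hregpow : ∀ (k : ℕ) h, x ^ k * h ∈ J → h ∈ J := by
    intro k
    induction k with
    | zero => intro h hh; simpa using hh
    | succ k ih =>
      intro h hh
      exact ih _ (hreg _ (by rwa [← mul_assoc, ← pow_succ']))
  have hmem : ∀ h, h ∈ symbolicPower I n ↔ ∀ p ∈ I.minimalPrimes, ∃ s ∉ p, s * h ∈ I ^ n := by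
    intro h
    simp only [symbolicPower, Submodule.mem_iInf, Subtype.forall, Ideal.mem_comap]
    refine forall₂_congr fun p hp => ?_
    have := hp.1.1
    rw [IsLocalization.algebraMap_mem_map_algebraMap_iff p.primeCompl]
    rfl
  apply le_antisymm
  · intro h hh
    rw [hmem] at hh
    have : x ∈ (Submodule.colon J {h}).radical := by
      rw [Ideal.radical_eq_sInf, Submodule.mem_sInf]
      rintro P ⟨hP, hPprime⟩
      by_contra hxP
      have hIP : I ≤ P := by
        refine hPprime.le_of_pow_le (n := n) (le_trans (fun s hs => ?_) hP)
        exact Submodule.mem_colon_singleton.2 (J.mul_mem_right _ (hIJ hs))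
      obtain ⟨p, hp, hpP⟩ := Ideal.exists_minimalPrimes_le hIP
      have hpprime : p.IsPrime := hp.1.1
      have hPm : P < maximalIdeal R := lt_of_le_of_ne (le_maximalIdeal hPprime.ne_top)
        fun h => hxP (h ▸ hx)
      have hmin : maximalIdeal R ∈ (p ⊔ Ideal.span {x}).minimalPrimes := by
        refine ⟨⟨inferInstance, sup_le (hpP.trans hPm.le) ?_⟩, ?_⟩
        · simpa [Ideal.span_singleton_le_iff_mem] using hx
        · rintro q ⟨hq, hle⟩ -
          rw [hI q hq (hp.1.2.trans (le_sup_left.trans hle))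
            (hle (Ideal.mem_sup_right (Ideal.mem_span_singleton_self x)))]
      have hpeq : p = P := by
        by_contra hne
        exact not_lt_of_mem_minimalPrimes_sup_span hmin hPm (lt_of_le_of_ne hpP hne)
      subst hpeq
      obtain ⟨s, hs, hsh⟩ := hh p hp
      exact hs (hP (Submodule.mem_colon_singleton.2 (hIJ hsh)))
    obtain ⟨k, hk⟩ := this
    exact hregpow k h (Submodule.mem_colon_singleton.1 hk)
  · intro h hh
    rw [hmem]
    intro p hp
    have hpprime : p.IsPrime := hp.1.1
    have hpm : p ≠ maximalIdeal R := by
      rintro rfl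
      have : x ∈ I.radical := by
        rw [Ideal.radical_eq_sInf, Submodule.mem_sInf]
        rintro P ⟨hP, hPprime⟩
        exact hp.2 ⟨hPprime, hP⟩ (le_maximalIdeal hPprime.ne_top) hx
      obtain ⟨k, hk⟩ := this
      refine hJ ((Ideal.eq_top_iff_one _).2 (hregpow (k * n) 1 ?_))
      rw [mul_one, pow_mul]
      exact hIJ (Ideal.pow_mem_pow hk n)
    obtain ⟨t, htT, htp⟩ := SetLike.not_le_iff_exists.1 fun h => hpm (hT p hpprime h)
    exact ⟨t, htp, hTJ t htT h hh⟩

/-- The ideal `S` is contained in `(x, yⁿ)` and every multiple of `x` in `S + xJ` lies in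
`xJ`. -/
def LiftsModulo (x y : R) (J S : Ideal R) (n : ℕ) : Prop :=
  (∀ s ∈ S, ∃ f g, s = x * f + y ^ n * g) ∧
    ∀ h, x * h ∈ S ⊔ Ideal.span {x} * J → x * h ∈ Ideal.span {x} * J

theorem liftsModulo_span_singleton {x y g : R} {J : Ideal R} {n : ℕ}
    (hyx : ∀ (i : ℕ) (s f : R), y ^ i * s = x * f → ∃ f', s = x * f') (hgJ : g ∈ J)
    (hg : x ∣ g - y ^ n) : LiftsModulo x y J (Ideal.span {g}) n := by
  obtain ⟨l, hl⟩ := hg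
  constructor
  · intro s hs
    obtain ⟨r, rfl⟩ := Ideal.mem_span_singleton'.1 hs
    exact ⟨r * l, r, by linear_combination r * hl⟩
  · intro h hh
    obtain ⟨_, ⟨r, rfl⟩, _, ⟨j, hj, rfl⟩, he⟩ := by
      simpa only [Submodule.mem_sup, Ideal.mem_span_singleton_mul,
        Ideal.mem_span_singleton'] using hh
    obtain ⟨t, rfl⟩ := hyx n r (h - r * l - j) (by linear_combination he - r * hl)
    rw [Ideal.mem_span_singleton_mul]
    exact ⟨t * g + j, J.add_mem (J.mul_mem_left _ hgJ) hj, by linear_combination he⟩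

theorem LiftsModulo.sup_span {x y z g g' t j : R} {J S : Ideal R} {α δ k α' : ℕ}
    (hS : LiftsModulo x y J S α') (hα : α' = α + δ)
    (hyx : ∀ (i : ℕ) (s f : R), y ^ i * s = x * f → ∃ f', s = x * f')
    (hP : PowersCancel x y z) (hgJ : g ∈ J) (hg : x ∣ g - y ^ α * z ^ k)
    (hg' : g' ∈ S) (hj : j ∈ J) (hrel : y ^ δ * g = t * g' + x * j) :
    LiftsModulo x y J (Ideal.span {g} ⊔ S) α := by
  subst hα
  obtain ⟨l, hl⟩ := hg
  constructor
  · intro s hs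
    obtain ⟨_, ⟨r, rfl⟩, s', hs', rfl⟩ := by
      simpa only [Submodule.mem_sup, Ideal.mem_span_singleton'] using hs
    obtain ⟨f, e, rfl⟩ := hS.1 s' hs'
    exact ⟨r * l + f, r * z ^ k + y ^ δ * e, by rw [pow_add]; linear_combination r * hl⟩
  · intro h hh
    obtain ⟨_, ⟨_, ⟨r, rfl⟩, s, hs, rfl⟩, _, ⟨i, hi, rfl⟩, he⟩ := by
      simpa only [Submodule.mem_sup, Ideal.mem_span_singleton_mul,
        Ideal.mem_span_singleton'] using hh
    obtain ⟨f, e, hse⟩ := hS.1 s hs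
    rw [pow_add] at hse
    obtain ⟨f₁, hf₁⟩ := hyx α (r * z ^ k + y ^ δ * e) (h - i - r * l - f)
      (by linear_combination he - r * hl - hse)
    obtain ⟨f₂, e₂, rfl⟩ := hP.2.2 k 1 δ r f₁ (-e) (by linear_combination hf₁)
    apply hS.2
    simp only [Submodule.mem_sup, Ideal.mem_span_singleton_mul]
    exact ⟨e₂ * t * g' + s, S.add_mem (S.mul_mem_left _ hg') hs, _,
      ⟨f₂ * g + e₂ * j + i, J.add_mem (J.add_mem (J.mul_mem_left _ hgJ) (J.mul_mem_left _ hj)) hi,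
        rfl⟩, by linear_combination he - e₂ * hrel⟩

theorem dvd_mul_mul_sub {x a b c A B C : R} (ha : x ∣ a - A) (hb : x ∣ b - B) (hc : x ∣ c - C) :
    x ∣ a * b * c - A * B * C := by
  obtain ⟨l, hl⟩ := ha
  obtain ⟨m, hm⟩ := hb
  obtain ⟨n, hn⟩ := hc
  exact ⟨l * b * c + A * m * c + A * B * n, by
    linear_combination b * c * hl + A * c * hm + A * B * hn⟩

end

section
variable {R : Type*} [CommRing R] {x y z a b c d e : R} {β γ P Q : ℕ}

namespace IsMinorsSystem

theorem exists_of_mul_mem_mod_x (h : IsMinorsSystem x (y ^ β) (z ^ γ) (y ^ P) (z ^ Q) a b c d e)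
    (hP : PowersCancel x y z) {r k : R} (hr : r * d - x * k ∈ Ideal.span {a, b, c} ^ 3) :
    ∃ f g l, r = x * f + (y ^ β) ^ 2 * g + (z ^ γ) ^ 2 * l := by
  obtain ⟨t, ht⟩ := mem_span_triple_cube hr
  obtain ⟨h1, h2, h3⟩ := hP
  set v := y ^ β with hv
  set w := z ^ γ with hw
  set p := y ^ P with hp
  set q := z ^ Q with hq
  obtain ⟨T₁, T₂, hT⟩ : ∃ T₁ T₂, r * d - x * k = t 0 * a ^ 3 + b * T₁ + c * T₂ :=
    ⟨t 1 * (a * a) + t 3 * (a * b) + t 4 * (a * c) + t 6 * (b * b) + t 7 * (b * c) + t 8 * (c * c),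
      t 2 * (a * a) + t 5 * (a * c) + t 9 * (c * c), by rw [ht]; ring⟩
  rw [h.ha, h.hb, h.hc, h.hd] at hT
  obtain ⟨s, hs⟩ : ∃ s, p * (q ^ 3 * w ^ 7 * r - v ^ 2 * (w * T₁ + v * T₂ - v ^ 5 * p ^ 2 * r)) =
      x * s + z ^ (9 * γ + 3 * Q) * t 0 := by
    refine ⟨k + x ^ 2 * T₁ + w ^ 2 * q * T₂ + t 0 * (x * v * (3 * w ^ 6 * q ^ 2
      + 3 * w ^ 3 * q * x ^ 2 * v + x ^ 4 * v ^ 2)) - r * (v ^ 4 * w ^ 2 * p ^ 2 * q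
      + x * v * w ^ 4 * p * q ^ 2 + q * x ^ 6 + x ^ 3 * v ^ 2 * w * p * q), ?_⟩
    rw [show z ^ (9 * γ + 3 * Q) = w ^ 9 * q ^ 3 by rw [hw, hq]; ring]
    linear_combination hT
  obtain ⟨s₁, s₂, hs₁⟩ := h2 P 1 (9 * γ + 3 * Q) _ s (t 0) (by rw [pow_one]; exact hs)
  obtain ⟨s₃, s₄, hs₃⟩ := h3 (7 * γ + 3 * Q) 1 (2 * β) (r - w ^ 2 * s₂) s₁
      (w * T₁ + v * T₂ - v ^ 5 * p ^ 2 * r) (by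
    rw [show z ^ (9 * γ + 3 * Q) = w ^ 9 * q ^ 3 by rw [hw, hq]; ring] at hs₁
    rw [show z ^ (7 * γ + 3 * Q) = w ^ 7 * q ^ 3 by rw [hw, hq]; ring,
      show y ^ (2 * β) = v ^ 2 by rw [hv]; ring]
    linear_combination hs₁)
  refine ⟨s₃, s₄, s₂, ?_⟩
  rw [show y ^ (2 * β) = v ^ 2 by rw [hv]; ring] at hs₃
  linear_combination hs₃

theorem mem_squaresAndProd_of_mul_mem
    (h : IsMinorsSystem x (y ^ β) (z ^ γ) (y ^ P) (z ^ Q) a b c d e)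
    (hP : PowersCancel x y z) {r : R} (hr : r * d ∈ Ideal.span {a, b, c} ^ 3) :
    r ∈ squaresAndProd x (y ^ β) (z ^ γ) := by
  have hP' : PowersCancel x (y ^ β) (z ^ γ) := by simpa using hP.pow 1 β γ
  refine mem_squaresAndProd_of_mod hP' (h.exists_of_mul_mem_mod_x hP (k := 0) (by simpa using hr))
    ?_ ?_
  · obtain ⟨t, ht⟩ := mem_span_triple_cube hr
    obtain ⟨h1, h2, h3⟩ := hP'
    obtain ⟨-, -, h4⟩ := hP.pow 1 β 1
    simp only [pow_one] at h4
    set v := y ^ β with hv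
    set w := z ^ γ with hw
    set p := y ^ P with hp
    obtain ⟨T₁, T₂, hT⟩ : ∃ T₁ T₂, r * d = t 6 * b ^ 3 + a * T₁ + c * T₂ :=
      ⟨t 0 * (a * a) + t 1 * (a * b) + t 2 * (a * c) + t 3 * (b * b) + t 4 * (b * c)
        + t 5 * (c * c), t 7 * (b * b) + t 8 * (b * c) + t 9 * (c * c), by rw [ht]; ring⟩
    rw [h.ha, h.hb, h.hc, h.hd] at hT
    obtain ⟨s₁, s₂, hs⟩ := h4 Q 9 1
      (x ^ 7 * r - w ^ 2 * (w * T₁ + x * T₂ - w ^ 5 * p * (z ^ Q) ^ 2 * r))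
      (t 6) (x ^ 2 * T₁ + v ^ 2 * p * T₂ + t 6 * (v * w * p * (3 * x ^ 6 + 3 * x ^ 3 * v ^ 2 * w * p
        + v ^ 4 * w ^ 2 * p ^ 2)) - r * (v ^ 6 * p ^ 3 + x * v ^ 3 * w ^ 2 * p ^ 2 * z ^ Q
        + x ^ 2 * w ^ 4 * p * (z ^ Q) ^ 2 + x ^ 4 * v * w * p * z ^ Q)) (by linear_combination hT)
    obtain ⟨s₃, s₄, hs'⟩ := h1 7 1 2 (r - x ^ 2 * s₁) s₂
      (w * T₁ + x * T₂ - w ^ 5 * p * (z ^ Q) ^ 2 * r)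
      (by linear_combination hs)
    exact ⟨s₃, s₁, s₄, by linear_combination hs'⟩
  · obtain ⟨t, ht⟩ := mem_span_triple_cube hr
    obtain ⟨-, h2, -⟩ := hP.pow 1 1 γ
    simp only [pow_one] at h2
    set v := y ^ β with hv
    set w := z ^ γ with hw
    set p := y ^ P with hp
    set q := z ^ Q with hq
    obtain ⟨T₁, T₂, hT⟩ : ∃ T₁ T₂, r * d = t 9 * c ^ 3 + a * T₁ + b * T₂ :=
      ⟨t 0 * (a * a) + t 1 * (a * b) + t 2 * (a * c) + t 3 * (b * b) + t 4 * (b * c)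
        + t 5 * (c * c), t 6 * (b * b) + t 7 * (b * c) + t 8 * (c * c), by rw [ht]; ring⟩
    rw [h.ha, h.hb, h.hc, h.hd] at hT
    obtain ⟨s₁, s₂, hs⟩ := h2 (7 * β + 3 * P) 2 1 (r - v ^ 2 * t 9)
      (v * T₁ + x * T₂ - q * x ^ 5 * r)
      (w ^ 2 * q * T₁ + v ^ 2 * p * T₂ + t 9 * (x * w * q * (3 * v ^ 6 * p ^ 2
        + 3 * v ^ 3 * p * x * w ^ 2 * q + x ^ 2 * w ^ 4 * q ^ 2)) - r * (x * v ^ 4 * w * p ^ 2 * q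
        + x ^ 2 * v * w ^ 3 * p * q ^ 2 + p * q ^ 3 * w ^ 6 + x ^ 4 * v ^ 2 * p * q)) (by
        rw [show y ^ (7 * β + 3 * P) = v ^ 7 * p ^ 3 by rw [hv, hp]; ring]
        linear_combination hT)
    exact ⟨s₂, s₁, t 9, by linear_combination hs⟩

theorem mul_mem_of_mem_squaresAndProd {u v w p q : R} (h : IsMinorsSystem u v w p q a b c d e)
    {r : R} (hr : r ∈ squaresAndProd u v w) : r * d ∈ Ideal.span {a, b, c} ^ 3 := by
  have ha : a ∈ Ideal.span {a, b, c} := Ideal.subset_span (by simp)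
  have hb : b ∈ Ideal.span {a, b, c} := Ideal.subset_span (by simp)
  have hc : c ∈ Ideal.span {a, b, c} := Ideal.subset_span (by simp)
  have hmul : ∀ {s t r}, s ∈ Ideal.span {a, b, c} → t ∈ Ideal.span {a, b, c} →
      r ∈ Ideal.span {a, b, c} → s * t * r ∈ Ideal.span {a, b, c} ^ 3 := fun hs ht hr => by
    rw [pow_succ, pow_two]
    exact Ideal.mul_mem_mul (Ideal.mul_mem_mul hs ht) hr
  obtain ⟨f, g, k, l, rfl⟩ := mem_squaresAndProd.1 hr
  have : (u ^ 2 * f + v ^ 2 * g + w ^ 2 * k + u * v * w * l) * d =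
      (f * q) * (b * b * b) + (f * p) * (a * c * c) + g * (c * c * c) + (g * q) * (a * a * b)
      + (k * p) * (a * a * a) + k * (b * b * c) + (l * w * q) * (a * b * b)
      + (l * v * p) * (a * a * c) + (l * u) * (b * c * c) := by
    linear_combination f * h.sq_u_mul_d + g * h.sq_v_mul_d + k * h.sq_w_mul_d
      + l * u * h.v_mul_w_mul_d + l * a * h.u_mul_e
  rw [this]
  refine add_mem (add_mem (add_mem (add_mem (add_mem (add_mem (add_mem (add_mem ?_ ?_) ?_) ?_) ?_)
    ?_) ?_) ?_) ?_ <;> exact Ideal.mul_mem_left _ _ (hmul ‹_› ‹_› ‹_›)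

theorem mem_span {u v w p q : R} (h : IsMinorsSystem u v w p q a b c d e) :
    a ∈ Ideal.span {u, v, w} ∧ b ∈ Ideal.span {u, v, w} ∧ c ∈ Ideal.span {u, v, w} := by
  simp only [mem_span_triple', h.ha, h.hb, h.hc]
  exact ⟨⟨u * v, 0, w ^ 2 * q, by ring⟩, ⟨u ^ 2, v * w * p, 0, by ring⟩,
    ⟨w ^ 2 * q, v ^ 2 * p, 0, by ring⟩⟩

theorem d_mem_span {u v w p q : R} (h : IsMinorsSystem u v w p q a b c d e) :
    d ∈ Ideal.span {u, v, w} := by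
  rw [mem_span_triple', h.hd]
  exact ⟨q * u ^ 6 + u ^ 3 * v ^ 2 * w * p * q, v ^ 6 * p ^ 3 + u * v ^ 3 * w ^ 2 * p ^ 2 * q
    + u ^ 2 * w ^ 4 * p * q ^ 2, p * q ^ 3 * w ^ 6, by ring⟩

theorem mem_of_x_mul_mem (h : IsMinorsSystem x (y ^ β) (z ^ γ) (y ^ P) (z ^ Q) a b c d e)
    (hP : PowersCancel x y z) (hyx : ∀ (i : ℕ) (s f : R), y ^ i * s = x * f → ∃ f', s = x * f')
    (hx : ∀ s, x * s = 0 → s = 0) {r : R}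
    (hr : x * r ∈ Ideal.span {a, b, c} ^ 3 ⊔ Ideal.span {d}) :
    r ∈ Ideal.span {a, b, c} ^ 3 ⊔ Ideal.span {d} := by
  set J := Ideal.span {a, b, c} ^ 3 ⊔ Ideal.span {d} with hJ
  have hIJ : Ideal.span {a, b, c} ^ 3 ≤ J := le_sup_left
  have hdJ : d ∈ J := Ideal.mem_sup_right (Ideal.mem_span_singleton_self d)
  have haI : a ∈ Ideal.span {a, b, c} := Ideal.subset_span (by simp)
  have hbI : b ∈ Ideal.span {a, b, c} := Ideal.subset_span (by simp)
  have hcI : c ∈ Ideal.span {a, b, c} := Ideal.subset_span (by simp)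
  have hmul : ∀ {s t r}, s ∈ Ideal.span {a, b, c} → t ∈ Ideal.span {a, b, c} →
      r ∈ Ideal.span {a, b, c} → s * t * r ∈ J := fun hs ht hr => by
    apply hIJ
    rw [pow_succ, pow_two]
    exact Ideal.mul_mem_mul (Ideal.mul_mem_mul hs ht) hr
  have h2 := h.two_eq_zero
  have r1 := h.row₁
  have r2 := h.row₂
  have hxa : x ∣ a - z ^ (3 * γ + Q) := ⟨x * y ^ β, by rw [h.ha]; ring⟩
  have hxb : x ∣ b - y ^ (2 * β + P) * z ^ γ := ⟨x ^ 2, by rw [h.hb]; ring⟩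
  have hxc : x ∣ c - y ^ (3 * β + P) := ⟨(z ^ γ) ^ 2 * z ^ Q, by rw [h.hc]; ring⟩
  have haeJ : a * e ∈ J := by
    have : a * e = (y ^ β * z ^ γ) * d - b * c * c := by linear_combination -h.v_mul_w_mul_d
    rw [this]
    exact sub_mem (Ideal.mul_mem_left _ _ hdJ) (hmul hbI hcI hcI)
  have hself : ∀ s : R, s ∈ Ideal.span {s} := Ideal.mem_span_singleton_self
  have hself' : ∀ (s : R) (S : Ideal R), s ∈ Ideal.span {s} ⊔ S := fun s S =>
    Ideal.mem_sup_left (hself s)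
  have l9 : LiftsModulo x y J (Ideal.span {c * c * c}) (9 * β + 3 * P) :=
    liftsModulo_span_singleton hyx (hmul hcI hcI hcI) (by
      convert dvd_mul_mul_sub hxc hxc hxc using 2; ring)
  have l8 := l9.sup_span (z := z) (g := b * c * c) (t := z ^ γ) (j := a * c * c)
    (α := 8 * β + 3 * P) (δ := β) (k := γ) (by ring) hyx hP (hmul hbI hcI hcI)
    (by convert dvd_mul_mul_sub hxb hxc hxc using 2; ring) (hself _) (hmul haI hcI hcI)
    (by linear_combination (c * c) * r1 - (z ^ γ * c * (c * c) + x * a * (c * c)) * h2)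
  have l7 := l8.sup_span (z := z) (g := b * b * c) (t := z ^ γ) (j := a * b * c)
    (α := 7 * β + 3 * P) (δ := β) (k := 2 * γ) (by ring) hyx hP (hmul hbI hbI hcI)
    (by convert dvd_mul_mul_sub hxb hxb hxc using 2; ring) (hself' _ _) (hmul haI hbI hcI)
    (by linear_combination (b * c) * r1 - (z ^ γ * c * (b * c) + x * a * (b * c)) * h2)
  have l6 := l7.sup_span (z := z) (g := b * b * b) (t := z ^ γ) (j := a * b * b)
    (α := 6 * β + 3 * P) (δ := β) (k := 3 * γ) (by ring) hyx hP (hmul hbI hbI hbI)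
    (by convert dvd_mul_mul_sub hxb hxb hxb using 2; ring) (hself' _ _) (hmul haI hbI hbI)
    (by linear_combination (b * b) * r1 - (z ^ γ * c * (b * b) + x * a * (b * b)) * h2)
  have l5 := l6.sup_span (z := z) (g := a * c * c) (t := z ^ Q) (j := x * d)
    (α := 6 * β + 2 * P) (δ := P) (k := 3 * γ + Q) (by ring) hyx hP (hmul haI hcI hcI)
    (by convert dvd_mul_mul_sub hxa hxc hxc using 2; ring) (hself' _ _) (J.mul_mem_left _ hdJ)
    (by linear_combination -h.sq_u_mul_d - z ^ Q * b ^ 3 * h2)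
  have l4 := l5.sup_span (z := z) (g := a * b * c) (t := z ^ γ) (j := a * a * c)
    (α := 5 * β + 2 * P) (δ := β) (k := 4 * γ + Q) (by ring) hyx hP (hmul haI hbI hcI)
    (by convert dvd_mul_mul_sub hxa hxb hxc using 2; ring) (hself' _ _) (hmul haI haI hcI)
    (by linear_combination (a * c) * r1 - (z ^ γ * c * (a * c) + x * a * (a * c)) * h2)
  have l3 := l4.sup_span (z := z) (g := a * b * b) (t := z ^ γ) (j := a * a * b)
    (α := 4 * β + 2 * P) (δ := β) (k := 5 * γ + Q) (by ring) hyx hP (hmul haI hbI hbI)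
    (by convert dvd_mul_mul_sub hxa hxb hxb using 2; ring) (hself' _ _) (hmul haI haI hbI)
    (by linear_combination (a * b) * r1 - (z ^ γ * c * (a * b) + x * a * (a * b)) * h2)
  have l2 := l3.sup_span (z := z) (g := a * a * c) (t := z ^ γ * z ^ Q) (j := a * e)
    (α := 3 * β + P) (δ := β + P) (k := 6 * γ + 2 * Q) (by ring) hyx hP (hmul haI haI hcI)
    (by convert dvd_mul_mul_sub hxa hxa hxc using 2; ring) (hself' _ _) (haeJ)
    (by linear_combination -a * h.u_mul_e - z ^ γ * z ^ Q * a * b ^ 2 * h2)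
  have l1 := l2.sup_span (z := z) (g := a * a * b) (t := z ^ γ) (j := a * a * a)
    (α := 2 * β + P) (δ := β) (k := 7 * γ + 2 * Q) (by ring) hyx hP (hmul haI haI hbI)
    (by convert dvd_mul_mul_sub hxa hxa hxb using 2; ring) (hself' _ _) (hmul haI haI haI)
    (by linear_combination (a * a) * r1 - (z ^ γ * c * (a * a) + x * a * (a * a)) * h2)
  have l0 := l1.sup_span (z := z) (g := a * a * a) (t := (z ^ γ) ^ 2 * z ^ Q) (j := x * (a * a * c))
    (α := 0) (δ := 2 * β + P) (k := 9 * γ + 3 * Q) (by ring) hyx hP (hmul haI haI haI)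
    (by convert dvd_mul_mul_sub hxa hxa hxa using 2; ring) (hself' _ _)
    (J.mul_mem_left _ (hmul haI haI hcI))
    (by linear_combination a ^ 2 * r2 - ((z ^ γ) ^ 2 * z ^ Q * a ^ 2 * b + x ^ 2 * a ^ 2 * c) * h2)
  obtain ⟨i, hi, _, hed, hr⟩ := Submodule.mem_sup.1 hr
  obtain ⟨e₀, rfl⟩ := Ideal.mem_span_singleton'.1 hed
  obtain ⟨f, g, l, hfgl⟩ := h.exists_of_mul_mem_mod_x hP (r := e₀) (k := r) (by
    rw [show e₀ * d - x * r = -i by linear_combination hr]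
    exact neg_mem hi)
  have hi' : x * (r - f * d) ∈ Ideal.span {a, b, c} ^ 3 := by
    rw [show x * (r - f * d) = i + ((y ^ β) ^ 2 * g + (z ^ γ) ^ 2 * l) * d by
      linear_combination -hr + d * hfgl]
    refine add_mem hi (h.mul_mem_of_mem_squaresAndProd (mem_squaresAndProd.2 ⟨0, g, l, 0, ?_⟩))
    ring
  obtain ⟨t, ht⟩ := mem_span_triple_cube hi'
  have hmem : x * (r - f * d) ∈ Ideal.span {x} * J := by
    refine l0.2 _ (Ideal.mem_sup_left ?_)
    rw [ht]
    simp only [← Ideal.span_union, Set.singleton_union]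
    refine add_mem (add_mem (add_mem (add_mem (add_mem (add_mem (add_mem (add_mem (add_mem ?_ ?_)
      ?_) ?_) ?_) ?_) ?_) ?_) ?_) ?_ <;>
    exact Ideal.mul_mem_left _ _ (Ideal.subset_span (by simp))
  obtain ⟨j, hj, hxj⟩ := Ideal.mem_span_singleton_mul.1 hmem
  have : r - f * d - j = 0 := hx _ (by linear_combination -hxj)
  rw [show r = f * d + j by linear_combination this]
  exact add_mem (J.mul_mem_left _ hdJ) hj

end IsMinorsSystem
end

/-- Assume `α = 1`, `α' = 2`, `2β ≤ β'`, `2γ ≤ γ'`, `Q = (x, y^β, z^γ)` and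
`char R = 2`.  Then `(I³ :_R Q³)/(I³ :_R Q²) ≅ R/Q`,
`depth R/(I³ :_R Q³) > 0`, hence `I⁽³⁾ = I³ :_R Q³`, and
`length(I⁽³⁾/I³) = 7 · length(R/Q)`. -/
theorem third_symbolic_power_char_two
    {R : Type*} [CommRing R] [IsNoetherianRing R] [IsLocalRing R]
    (hdim : ringKrullDim R = 3)
    (hCM : ∀ u v w : R, (Ideal.span {u, v, w}).radical = maximalIdeal R →
      RingTheory.Sequence.IsRegular R [u, v, w])
    (x y z : R) (hsop : (Ideal.span {x, y, z}).radical = maximalIdeal R)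
    (β γ β' γ' : ℕ)
    (hβ : 0 < β) (hγ : 0 < γ)
    (hββ' : 2 * β ≤ β') (hγγ' : 2 * γ ≤ γ')
    (a b c : R)
    (ha : a = z ^ (γ + γ') - x ^ 2 * y ^ β)
    (hb : b = x ^ 3 - y ^ β' * z ^ γ)
    (hc : c = y ^ (β + β') - x * z ^ γ')
    (I : Ideal R) (hI : I = Ideal.span {a, b, c})
    (Q : Ideal R) (hQ : Q = Ideal.span {x, y ^ β, z ^ γ})
    (hchar : CharP R 2)
    (J₂ J₃ : Ideal R)
    (hJ₂ : J₂ = Submodule.colon ((I ^ 3 : Ideal R) : Submodule R R)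
      ((Q ^ 2 : Ideal R) : Submodule R R))
    (hJ₃ : J₃ = Submodule.colon ((I ^ 3 : Ideal R) : Submodule R R)
      ((Q ^ 3 : Ideal R) : Submodule R R)) :
    Nonempty
      ((↥J₃ ⧸ Submodule.comap J₃.subtype (J₂ : Submodule R R)) ≃ₗ[R] (R ⧸ Q)) ∧
      (∃ r ∈ maximalIdeal R, IsSMulRegular (R ⧸ J₃) r) ∧
      symbolicPower I 3 = J₃ ∧
      ∃ m : ℕ, HasLength R (R ⧸ Q) m ∧
        HasLength R (↥J₃ ⧸ Submodule.comap J₃.subtype ((I ^ 3 : Ideal R) : Submodule R R))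
          (7 * m) := by
  have h2 : (2 : R) = 0 := CharTwo.two_eq_zero
  obtain ⟨P, rfl⟩ := Nat.exists_eq_add_of_le hββ'
  obtain ⟨S, rfl⟩ := Nat.exists_eq_add_of_le hγγ'
  obtain ⟨d, e, h⟩ : ∃ d e, IsMinorsSystem x (y ^ β) (z ^ γ) (y ^ P) (z ^ S) a b c d e :=
    ⟨_, _, h2, by rw [ha]; linear_combination -x ^ 2 * y ^ β * h2,
      by rw [hb]; linear_combination -y ^ (2 * β + P) * z ^ γ * h2,
      by rw [hc]; linear_combination -x * z ^ (2 * γ + S) * h2, rfl, rfl⟩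
  have hP := powersCancel_of_isRegular hCM hsop
  have hP' : PowersCancel x (y ^ β) (z ^ γ) := by simpa using hP.pow 1 β γ
  have hQrad : Q.radical = maximalIdeal R := by
    simpa [hQ] using radical_span_pow hsop one_ne_zero hβ.ne' hγ.ne'
  have hxmul : ∀ s, x * s = 0 → s = 0 := by
    intro s hs
    have := (hCM x y z hsop).toIsWeaklyRegular.regular_mod_prev 0 (by simp)
    have : s ∈ (Ideal.ofList (List.take 0 [x, y, z]) • ⊤ : Ideal R) :=
      this.mem_of_mul_mem (by simp [hs])
    simpa using this
  have hreg : ∀ r, x * r ∈ I ^ 3 ⊔ Ideal.span {d} → r ∈ I ^ 3 ⊔ Ideal.span {d} := by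
    intro r hr
    rw [hI] at hr ⊢
    exact h.mem_of_x_mul_mem hP (fun i s f => exists_eq_mul_of_pow_mul hCM hsop i) hxmul hr
  have hdmem : ∀ r, r * d ∈ I ^ 3 ↔ r ∈ squaresAndProd x (y ^ β) (z ^ γ) := by
    intro r
    rw [hI]
    exact ⟨h.mem_squaresAndProd_of_mul_mem hP, h.mul_mem_of_mem_squaresAndProd⟩
  have hxQ : x ∈ Q := hQ ▸ Ideal.subset_span (by simp)
  have hyQ : y ^ β ∈ Q := hQ ▸ Ideal.subset_span (by simp)
  have hQ3 : Q ^ 3 ≤ squaresAndProd x (y ^ β) (z ^ γ) := by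
    intro s hs
    obtain ⟨t, rfl⟩ := mem_span_triple_cube (hQ ▸ hs)
    rw [mem_squaresAndProd]
    exact ⟨t 0 * x + t 1 * y ^ β + t 2 * z ^ γ, t 3 * x + t 6 * y ^ β + t 7 * z ^ γ,
      t 5 * x + t 8 * y ^ β + t 9 * z ^ γ, t 4, by ring⟩
  have hJQ : ∀ t ∈ Q ^ 3, ∀ r ∈ I ^ 3 ⊔ Ideal.span {d}, t * r ∈ I ^ 3 := by
    intro t ht r hr
    obtain ⟨i, hi, _, hs, rfl⟩ := Submodule.mem_sup.1 hr
    obtain ⟨s, rfl⟩ := Ideal.mem_span_singleton'.1 hs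
    rw [mul_add, mul_left_comm]
    exact add_mem (Ideal.mul_mem_left _ _ hi)
      (Ideal.mul_mem_left _ _ ((hdmem t).2 (hQ3 ht)))
  have hJ : J₃ = I ^ 3 ⊔ Ideal.span {d} := by
    rw [hJ₃]
    apply le_antisymm
    · intro r hr
      have : r * x ^ 3 ∈ I ^ 3 := Submodule.mem_colon.1 hr _ (Ideal.pow_mem_pow hxQ 3)
      refine hreg _ (hreg _ (hreg _ (Ideal.mem_sup_left ?_)))
      convert this using 1
      ring
    · intro r hr
      refine Submodule.mem_colon.2 fun t ht => ?_
      rw [smul_eq_mul, mul_comm]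
      exact hJQ t ht r hr
  have hIJ₂ : I ^ 3 ≤ J₂ := by
    intro r hr
    rw [hJ₂]
    exact Submodule.mem_colon.2 fun t _ => Ideal.mul_mem_right _ _ hr
  have hdJ₂ : ∀ r, r * d ∈ J₂ ↔ r ∈ Q := by
    intro r
    rw [hJ₂, Submodule.mem_colon]
    constructor
    · intro hr
      have := hr (x * y ^ β) (by rw [pow_two]; exact Ideal.mul_mem_mul hxQ hyQ)
      rw [hQ, ← mul_mem_squaresAndProd_iff hP', ← hdmem]
      rwa [smul_eq_mul, mul_right_comm] at this
    · intro hr t ht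
      rw [smul_eq_mul, mul_right_comm, hdmem]
      apply hQ3
      rw [pow_succ']
      exact Ideal.mul_mem_mul hr ht
  have hprime : ∀ A : Ideal R, A.IsPrime → Q ≤ A → A = maximalIdeal R := fun A hA hle =>
    le_antisymm (le_maximalIdeal hA.ne_top) (hQrad ▸ hA.radical_le_iff.2 hle)
  have hQm : Q ≤ maximalIdeal R := hQrad ▸ Ideal.le_radical
  refine ⟨nonempty_quotient_equiv_of_sup_span hJ hIJ₂ hdJ₂, ⟨x, hQm hxQ, ?_⟩, ?_, ?_⟩
  · rw [hJ, isSMulRegular_quotient_iff_mem_of_smul_mem]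
    exact hreg
  · rw [hJ]
    refine symbolicPower_eq_of_forall_mul_mem (T := Q ^ 3) le_sup_left ?_ (hQm hxQ) hreg ?_ ?_ hJQ
    · refine ne_top_of_le_ne_top (maximalIdeal.isMaximal R).ne_top (le_trans ?_ hQm)
      refine sup_le ((Ideal.pow_le_self three_ne_zero).trans ?_) ?_
      · rw [hI, hQ, Ideal.span_le, Set.insert_subset_iff, Set.insert_subset_iff,
          Set.singleton_subset_iff]
        exact h.mem_span
      · rw [Ideal.span_singleton_le_iff_mem, hQ]
        exact h.d_mem_span
    · intro A hA hIA hxA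
      obtain ⟨haA, hcA⟩ : a ∈ A ∧ c ∈ A := by
        refine ⟨hIA ?_, hIA ?_⟩ <;> rw [hI] <;> exact Ideal.subset_span (by simp)
      refine hprime A hA ?_
      rw [hQ, Ideal.span_le, Set.insert_subset_iff, Set.insert_subset_iff,
        Set.singleton_subset_iff]
      have hzA : z ^ (γ + (2 * γ + S)) ∈ A := by
        rw [show z ^ (γ + (2 * γ + S)) = a + x * (x * y ^ β) by rw [ha]; ring]
        exact add_mem haA (A.mul_mem_right _ hxA)
      have hyA : y ^ (β + (2 * β + P)) ∈ A := by
        rw [show y ^ (β + (2 * β + P)) = c + x * z ^ (2 * γ + S) by rw [hc]; ring]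
        exact add_mem hcA (A.mul_mem_right _ hxA)
      exact ⟨hxA, A.pow_mem_of_mem (hA.mem_of_pow_mem _ hyA) _ hβ,
        A.pow_mem_of_mem (hA.mem_of_pow_mem _ hzA) _ hγ⟩
    · exact fun A hA hle => hprime A hA (hA.le_of_pow_le hle)
  · lift Module.length R (R ⧸ Q) to ℕ using length_quotient_ne_top hQrad with m hm
    refine ⟨m, hasLength_of_length_eq hm.symm, hasLength_of_length_eq ?_⟩
    obtain ⟨φ⟩ := nonempty_quotient_equiv_of_sup_span hJ le_rfl hdmem
    rw [φ.length_eq, length_quotient_squaresAndProd hP', ← hQ, ← hm]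
    norm_cast
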